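/- In the Nehari setting, the ground state level admits the min-max characterization: inf{Φ(u) : u ∈ N} = inf{ sup_{s>0} Φ(sw) : w ∈ H¹(V)\{0} }, where N = {u ∈ H¹(V)\{0} : Φ'(u)u = 0} is the Nehari manifold. -/

import Mathlib

open scoped ENNReal

noncomputable section

/-- `H¹(V)`: as a set, the ℓ²-summable real functions on the vertex set;
the `H¹` norm is equivalent to the ℓ² norm by the uniform degree bound. -/
abbrev H1 (Vtx : Type*) := lp (fun _ : Vtx => ℝ) 2

variable {Vtx : Type*}

/-- `Γ(u,v)(x) = (1/2) Σ_{y∼x} (u(y)-u(x))(v(y)-v(x))`. -/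
def gammaProd (adj : Vtx → Vtx → Prop) (u v : Vtx → ℝ) (x : Vtx) : ℝ :=
  (1/2) * ∑' y : {y : Vtx // adj x y}, (u y.1 - u x) * (v y.1 - v x)

/-- `|∇u|²(x) = (1/2) Σ_{y∼x} (u(y)-u(x))²`. -/
def gradSq (adj : Vtx → Vtx → Prop) (u : Vtx → ℝ) (x : Vtx) : ℝ :=
  gammaProd adj u u x

/-- `Δu(x) = Σ_{y∼x} (u(y)-u(x))`. -/
def graphLap (adj : Vtx → Vtx → Prop) (u : Vtx → ℝ) (x : Vtx) : ℝ :=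
  ∑' y : {y : Vtx // adj x y}, (u y.1 - u x)

/-- the norm `‖u‖` induced by the potential `V`:
`‖u‖² = Σ_x (|∇u|²(x) + V(x)u(x)²)`. -/
def nrmV (adj : Vtx → Vtx → Prop) (Vp : Vtx → ℝ) (u : Vtx → ℝ) : ℝ :=
  Real.sqrt (∑' x, (gradSq adj u x + Vp x * (u x)^2))

/-- the `V`-norm of an element of `H¹`. -/
def nrmH (adj : Vtx → Vtx → Prop) (Vp : Vtx → ℝ) (u : H1 Vtx) : ℝ :=
  nrmV adj Vp (fun y => u y)

/-- `⟨u,v⟩ = Σ_x (Γ(u,v)(x) + V(x)u(x)v(x))`. -/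
def iprodH (adj : Vtx → Vtx → Prop) (Vp : Vtx → ℝ) (u v : H1 Vtx) : ℝ :=
  ∑' x, (gammaProd adj (fun y => u y) (fun y => v y) x + Vp x * u x * v x)

/-- the variational functional `Φ(u) = ½‖u‖² − Σ_x F(x,u(x))`. -/
def PhiF (adj : Vtx → Vtx → Prop) (Vp : Vtx → ℝ) (F : Vtx → ℝ → ℝ) (u : H1 Vtx) : ℝ :=
  (1/2) * ∑' x, (gradSq adj (fun y => u y) x + Vp x * (u x)^2) - ∑' x, F x (u x)

/-- the Nehari manifold `N = {u ∈ H¹\{0} : Φ'(u)u = 0}`. -/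
def Nehari (adj : Vtx → Vtx → Prop) (Vp : Vtx → ℝ) (F : Vtx → ℝ → ℝ) : Set (H1 Vtx) :=
  {u | u ≠ 0 ∧ fderiv ℝ (PhiF adj Vp F) u u = 0}

/-- adjacency of the lattice graph `ℤ^N`. -/
def adjZ (N : ℕ) (x y : Fin N → ℤ) : Prop := (∑ i, (x i - y i).natAbs) = 1

end

open Filter Topology

namespace Neh

lemma l2_hasSum {ι : Type*} (u : H1 ι) : HasSum (fun i => (u i)^2) (‖u‖^2) := by
  have := lp.hasSum_inner (𝕜 := ℝ) u u
  rw [real_inner_self_eq_norm_sq] at this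
  refine this.congr_fun ?_ |> fun h => h
  intro i
  simp [sq]

lemma l2_mem {ι : Type*} {g : ι → ℝ} (h : Summable fun i => (g i)^2) :
    Memℓp g 2 := by
  apply memℓp_gen
  simpa using h

lemma diff_quad {ι κ : Type*} (A : H1 ι →ₗ[ℝ] (κ → ℝ)) (C : ℝ)
    (hs : ∀ u, Summable fun i => (A u i)^2)
    (hC : ∀ u, ∑' i, (A u i)^2 ≤ C^2 * ‖u‖^2) (hC0 : 0 ≤ C) :
    Differentiable ℝ (fun u : H1 ι => ∑' i, (A u i)^2) := by
  let T0 : H1 ι →ₗ[ℝ] H1 κ :=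
    { toFun := fun u => ⟨A u, l2_mem (hs u)⟩
      map_add' := by intro u v; ext i; simp; rfl
      map_smul' := by intro u v; ext i; simp }
  have hT : ∀ u, ‖T0 u‖^2 = ∑' i, (A u i)^2 := fun u => (l2_hasSum (T0 u)).tsum_eq.symm
  let T : H1 ι →L[ℝ] H1 κ := T0.mkContinuous C (by
    intro u
    apply le_of_sq_le_sq _ (by positivity)
    rw [hT, mul_pow]; exact hC u)
  have : (fun u : H1 ι => ∑' i, (A u i)^2) = fun u => ‖T u‖^2 := by
    funext u; exact (hT u).symm
  rw [this]
  exact T.differentiable.norm_sq ℝ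

section quad

lemma edge_fst {Vtx : Type*} (adj : Vtx → Vtx → Prop) (D : ℕ) (hfin : ∀ x, {y | adj x y}.Finite) (hdeg : ∀ x, {y | adj x y}.ncard ≤ D)
    (u : H1 Vtx) :
    Summable (fun e : (Σ x, {y // adj x y}) => (u e.1)^2) ∧
    ∑' e : (Σ x, {y // adj x y}), (u e.1)^2 ≤ D * ‖u‖^2 := by
  have hc : ∀ x, ∑' _ : {y // adj x y}, (u x)^2 = ({y | adj x y}.ncard : ℝ) * (u x)^2 := by
    intro x
    rw [tsum_const, nsmul_eq_mul]; rfl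
  have hu := l2_hasSum u
  have hle : ∀ x, ∑' _ : {y // adj x y}, (u x)^2 ≤ D * (u x)^2 := by
    intro x
    rw [hc]
    gcongr
    exact hdeg x
  have h2 : Summable fun x => ∑' _ : {y // adj x y}, (u x)^2 :=
    Summable.of_nonneg_of_le (fun x => tsum_nonneg fun _ => sq_nonneg _) hle
      (hu.summable.mul_left _)
  have h1 : Summable (fun e : (Σ x, {y // adj x y}) => (u e.1)^2) := by
    rw [summable_sigma_of_nonneg (fun _ => sq_nonneg _)]
    refine ⟨fun x => ?_, h2⟩
    have : Finite {y // adj x y} := hfin x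
    exact Summable.of_finite
  refine ⟨h1, ?_⟩
  rw [h1.tsum_sigma, ← hu.tsum_eq, ← tsum_mul_left]
  exact h2.tsum_le_tsum hle (hu.summable.mul_left _)

/-- Reversal of oriented edges. -/
def swapE {Vtx : Type*} (adj : Vtx → Vtx → Prop)
    (hsym : ∀ x y, adj x y → adj y x) :
    (Σ x, {y // adj x y}) ≃ (Σ x, {y // adj x y}) where
  toFun e := ⟨e.2.1, e.1, hsym _ _ e.2.2⟩
  invFun e := ⟨e.2.1, e.1, hsym _ _ e.2.2⟩
  left_inv _ := rfl
  right_inv _ := rfl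

lemma edge_snd {Vtx : Type*} (adj : Vtx → Vtx → Prop) (D : ℕ) (hsym : ∀ x y, adj x y → adj y x) (hfin : ∀ x, {y | adj x y}.Finite) (hdeg : ∀ x, {y | adj x y}.ncard ≤ D)
    (u : H1 Vtx) :
    Summable (fun e : (Σ x, {y // adj x y}) => (u e.2.1)^2) ∧
    ∑' e : (Σ x, {y // adj x y}), (u e.2.1)^2 ≤ D * ‖u‖^2 := by
  obtain ⟨h1, h2⟩ := edge_fst adj D hfin hdeg u
  exact ⟨(swapE adj hsym).summable_iff.2 h1, ((swapE adj hsym).tsum_eq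
    (fun e : (Σ x, {y // adj x y}) => (u e.1)^2)).trans_le h2⟩

lemma edge_sub {Vtx : Type*} (adj : Vtx → Vtx → Prop) (D : ℕ) (hsym : ∀ x y, adj x y → adj y x) (hfin : ∀ x, {y | adj x y}.Finite) (hdeg : ∀ x, {y | adj x y}.ncard ≤ D)
    (u : H1 Vtx) :
    Summable (fun e : (Σ x, {y // adj x y}) => (u e.2.1 - u e.1)^2) ∧
    ∑' e : (Σ x, {y // adj x y}), (u e.2.1 - u e.1)^2 ≤ (2 * Real.sqrt D)^2 * ‖u‖^2 := by
  obtain ⟨h1, h2⟩ := edge_fst adj D hfin hdeg u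
  obtain ⟨h3, h4⟩ := edge_snd adj D hsym hfin hdeg u
  have hs := (h3.add h1).mul_left 2
  have hle : ∀ e : (Σ x, {y // adj x y}), (u e.2.1 - u e.1)^2 ≤ 2 * ((u e.2.1)^2 + (u e.1)^2) :=
    fun e => by nlinarith [sq_nonneg (u e.2.1 + u e.1)]
  have h5 := Summable.of_nonneg_of_le (fun e => sq_nonneg _) hle hs
  refine ⟨h5, (h5.tsum_le_tsum hle hs).trans ?_⟩
  rw [tsum_mul_left, h3.tsum_add h1, mul_pow, Real.sq_sqrt (Nat.cast_nonneg D)]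
  linarith


/-- The quadratic part. -/
noncomputable def Q {Vtx : Type*} (adj : Vtx → Vtx → Prop) (Vp : Vtx → ℝ)
    (u : H1 Vtx) : ℝ :=
  ∑' x, (gradSq adj (fun y => u y) x + Vp x * (u x)^2)

lemma pot {Vtx : Type*} (Vp : Vtx → ℝ) (C1 C2 : ℝ) (hC1 : 0 < C1)
    (hVbd : ∀ x, C1 ≤ Vp x ∧ Vp x ≤ C2)
    (u : H1 Vtx) : Summable (fun x => Vp x * (u x)^2) ∧
    ∑' x, Vp x * (u x)^2 ≤ C2 * ‖u‖^2 ∧ C1 * ‖u‖^2 ≤ ∑' x, Vp x * (u x)^2 := by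
  have hu := l2_hasSum u
  have hle : ∀ x, Vp x * (u x)^2 ≤ C2 * (u x)^2 := fun x => by
    have := (hVbd x).2
    gcongr
  have hge : ∀ x, C1 * (u x)^2 ≤ Vp x * (u x)^2 := fun x => by
    have := (hVbd x).1
    gcongr
  have hs := Summable.of_nonneg_of_le
    (fun x => le_trans (by positivity) (hge x)) hle (hu.summable.mul_left _)
  refine ⟨hs, ?_, ?_⟩ <;> rw [← hu.tsum_eq, ← tsum_mul_left]
  · exact hs.tsum_le_tsum hle (hu.summable.mul_left _)
  · exact (hu.summable.mul_left _).tsum_le_tsum hge hs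

lemma Q_eq {Vtx : Type*} (adj : Vtx → Vtx → Prop) (D : ℕ) (hsym : ∀ x y, adj x y → adj y x) (hfin : ∀ x, {y | adj x y}.Finite) (hdeg : ∀ x, {y | adj x y}.ncard ≤ D) (Vp : Vtx → ℝ) (C1 C2 : ℝ) (hC1 : 0 < C1)
    (hVbd : ∀ x, C1 ≤ Vp x ∧ Vp x ≤ C2)
    (u : H1 Vtx) : Q adj Vp u =
    (1/2) * ∑' e : (Σ x, {y // adj x y}), (u e.2.1 - u e.1)^2 + ∑' x, Vp x * (u x)^2 := by
  obtain ⟨h5, -⟩ := edge_sub adj D hsym hfin hdeg u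
  obtain ⟨h6, -⟩ := pot Vp C1 C2 hC1 hVbd u
  have hg : ∀ x, gradSq adj (fun y => u y) x =
      (1/2) * ∑' y : {y // adj x y}, (u y.1 - u x)^2 := by
    intro x; simp only [gradSq, gammaProd, sq]
  unfold Q
  simp only [hg]
  rw [Summable.tsum_add (h5.sigma.mul_left _) h6, tsum_mul_left, h5.tsum_sigma]

lemma Q_ge {Vtx : Type*} (adj : Vtx → Vtx → Prop) (D : ℕ) (hsym : ∀ x y, adj x y → adj y x) (hfin : ∀ x, {y | adj x y}.Finite) (hdeg : ∀ x, {y | adj x y}.ncard ≤ D) (Vp : Vtx → ℝ) (C1 C2 : ℝ) (hC1 : 0 < C1)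
    (hVbd : ∀ x, C1 ≤ Vp x ∧ Vp x ≤ C2)
    (u : H1 Vtx) : C1 * ‖u‖^2 ≤ Q adj Vp u := by
  rw [Q_eq adj D hsym hfin hdeg Vp C1 C2 hC1 hVbd]
  have := (pot Vp C1 C2 hC1 hVbd u).2.2
  have h : 0 ≤ ∑' e : (Σ x, {y // adj x y}), (u e.2.1 - u e.1)^2 :=
    tsum_nonneg fun _ => sq_nonneg _
  linarith

lemma Q_smul {Vtx : Type*} (adj : Vtx → Vtx → Prop) (Vp : Vtx → ℝ)
    (s : ℝ) (u : H1 Vtx) : Q adj Vp (s • u) = s^2 * Q adj Vp u := by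
  unfold Q
  rw [← tsum_mul_left]
  congr 1; funext x
  have : gradSq adj (fun y => (s • u) y) x = s^2 * gradSq adj (fun y => u y) x := by
    simp only [gradSq, gammaProd]
    rw [mul_left_comm, ← tsum_mul_left (a := s^2)]
    congr 2; funext y
    simp; ring
  rw [this]; simp; ring

lemma Q_diff {Vtx : Type*} (adj : Vtx → Vtx → Prop) (D : ℕ) (hsym : ∀ x y, adj x y → adj y x) (hfin : ∀ x, {y | adj x y}.Finite) (hdeg : ∀ x, {y | adj x y}.ncard ≤ D) (Vp : Vtx → ℝ) (C1 C2 : ℝ) (hC1 : 0 < C1)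
    (hVbd : ∀ x, C1 ≤ Vp x ∧ Vp x ≤ C2)
    : Differentiable ℝ (Q adj Vp) := by
  have h1 : Differentiable ℝ (fun u : H1 Vtx =>
      ∑' e : (Σ x, {y // adj x y}), (u e.2.1 - u e.1)^2) :=
    diff_quad (κ := (Σ x, {y // adj x y}))
      { toFun := fun u e => u e.2.1 - u e.1
        map_add' := by intro u v; funext e; simp; ring
        map_smul' := by intro u v; funext e; simp; ring } (2 * Real.sqrt D)
      (fun u => (edge_sub adj D hsym hfin hdeg u).1)
      (fun u => (edge_sub adj D hsym hfin hdeg u).2) (by positivity)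
  have hV : ∀ (u : H1 Vtx) x, Vp x * (u x)^2 = (Real.sqrt (Vp x) * u x)^2 := by
    intro u x
    rw [mul_pow, Real.sq_sqrt (hC1.le.trans (hVbd x).1)]
  have h2 : Differentiable ℝ (fun u : H1 Vtx => ∑' x, Vp x * (u x)^2) := by
    simp only [hV]
    refine diff_quad (κ := Vtx)
      { toFun := fun u x => Real.sqrt (Vp x) * u x
        map_add' := by intro u v; funext e; simp; ring
        map_smul' := by intro u v; funext e; simp; ring } (Real.sqrt |C2|)
      (fun u => ?_) (fun u => ?_) (by positivity)
    · have := (pot Vp C1 C2 hC1 hVbd u).1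
      simp only [hV] at this
      exact this
    · have := (pot Vp C1 C2 hC1 hVbd u).2.1
      simp only [hV] at this
      refine this.trans ?_
      rw [Real.sq_sqrt (abs_nonneg _)]
      gcongr
      exact le_abs_self _
  have : Q adj Vp = fun u => (1/2) * ∑' e : (Σ x, {y // adj x y}), (u e.2.1 - u e.1)^2
      + ∑' x, Vp x * (u x)^2 := by
    funext u; exact Q_eq adj D hsym hfin hdeg Vp C1 C2 hC1 hVbd u
  rw [this]
  exact (h1.const_mul _).add h2

end quad

section nonlin

/-- mean value bound -/
lemma mvb {Vtx : Type*} (f : Vtx → ℝ → ℝ) (F : Vtx → ℝ → ℝ)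
    (hFd : ∀ x t, HasDerivAt (F x) (f x t) t)
    {ε δ : ℝ} (hε : 0 < ε) (h : ∀ x t, |t| < δ → |f x t| ≤ ε * |t|) (x : Vtx) (t v : ℝ)
    (htv : |t| + |v| < δ) : |F x (t + v) - F x t| ≤ ε * (|t| + |v|) * |v| := by
  have := Convex.norm_image_sub_le_of_norm_hasDerivWithin_le (f := F x) (f' := f x)
    (s := Set.Icc (-(|t| + |v|)) (|t| + |v|)) (x := t) (y := t + v) (C := ε * (|t| + |v|))
    (fun y _ => (hFd x y).hasDerivWithinAt) (fun y hy => by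
      have hy' := abs_le.2 hy
      refine (h x y (hy'.trans_lt htv)).trans ?_
      gcongr) (convex_Icc _ _)
    (abs_le.1 (le_add_of_nonneg_right (abs_nonneg v)))
    (abs_le.1 (abs_add_le t v))
  simpa using this

lemma F_small {Vtx : Type*} (f : Vtx → ℝ → ℝ) (F : Vtx → ℝ → ℝ)
    (hFd : ∀ x t, HasDerivAt (F x) (f x t) t) (hF0 : ∀ x, F x 0 = 0)
    {ε δ : ℝ} (hε : 0 < ε) (h : ∀ x t, |t| < δ → |f x t| ≤ ε * |t|) (x : Vtx) (t : ℝ)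
    (ht : |t| < δ) : |F x t| ≤ ε * t^2 := by
  have := mvb f F hFd hε h x 0 t (by simpa using ht)
  simp [hF0] at this
  rwa [mul_assoc, abs_mul_abs_self, ← sq] at this

lemma ev_small {Vtx : Type*}
    (u : H1 Vtx) {δ : ℝ} (hδ : 0 < δ) : ∀ᶠ x in cofinite, |u x| < δ := by
  have := (l2_hasSum u).summable.tendsto_cofinite_zero
  filter_upwards [this.eventually (gt_mem_nhds (show (0:ℝ) < δ^2 by positivity))] with x hx
  exact abs_lt_of_sq_lt_sq hx hδ.le

lemma F_summable {Vtx : Type*} (f : Vtx → ℝ → ℝ) (F : Vtx → ℝ → ℝ)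
    (hsm : ∀ ε > 0, ∃ δ > 0, ∀ x t, |t| < δ → |f x t| ≤ ε * |t|)
    (hFd : ∀ x t, HasDerivAt (F x) (f x t) t) (hF0 : ∀ x, F x 0 = 0)
    (u : H1 Vtx) : Summable fun x => F x (u x) := by
  obtain ⟨δ, hδ, h⟩ := hsm 1 one_pos
  refine Summable.of_norm_bounded_eventually ((l2_hasSum u).summable.mul_left 1) ?_
  filter_upwards [ev_small u hδ] with x hx
  exact F_small f F hFd hF0 one_pos h x _ hx

lemma f_mem {Vtx : Type*} (f : Vtx → ℝ → ℝ)
    (hsm : ∀ ε > 0, ∃ δ > 0, ∀ x t, |t| < δ → |f x t| ≤ ε * |t|)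
    (u : H1 Vtx) : Memℓp (fun x => f x (u x)) 2 := by
  obtain ⟨δ, hδ, h⟩ := hsm 1 one_pos
  apply l2_mem
  refine Summable.of_norm_bounded_eventually ((l2_hasSum u).summable) ?_
  filter_upwards [ev_small u hδ] with x hx
  have := h x _ hx
  rw [Real.norm_eq_abs, abs_pow, ← sq_abs (u x)]
  exact pow_le_pow_left₀ (abs_nonneg _) (by linarith) 2

/-- The absolute value of an `ℓ²` function. -/
noncomputable def absH {Vtx : Type*}
    (u : H1 Vtx) : H1 Vtx :=
  ⟨fun x => |u x|, l2_mem (by simpa using (l2_hasSum u).summable)⟩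

lemma absH_norm {Vtx : Type*}
    (u : H1 Vtx) : ‖absH u‖ = ‖u‖ := by
  have h1 := l2_hasSum (absH u)
  have h2 := l2_hasSum u
  have : (fun i => ((absH u) i)^2) = fun i => (u i)^2 := by
    funext i; exact sq_abs _
  rw [this] at h1
  exact (sq_eq_sq₀ (norm_nonneg _) (norm_nonneg _)).1 (h1.unique h2)

lemma cs {Vtx : Type*}
    (u v : H1 Vtx) : Summable (fun x => |u x| * |v x|) ∧
    ∑' x, |u x| * |v x| ≤ ‖u‖ * ‖v‖ := by
  have h := lp.hasSum_inner (𝕜 := ℝ) (absH u) (absH v)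
  have e : (fun i => inner ℝ ((absH u) i) ((absH v) i)) = fun x => |u x| * |v x| := by
    funext i; simp [absH, mul_comm]
  rw [e] at h
  refine ⟨h.summable, ?_⟩
  rw [h.tsum_eq, ← absH_norm u, ← absH_norm v]
  exact real_inner_le_norm _ _

lemma coord_le {Vtx : Type*}
    (u : H1 Vtx) (x : Vtx) : |u x| ≤ ‖u‖ :=
  lp.norm_apply_le_norm (by norm_num) u x

lemma N_hasFDerivAt {Vtx : Type*} (f : Vtx → ℝ → ℝ) (F : Vtx → ℝ → ℝ)
    (hsm : ∀ ε > 0, ∃ δ > 0, ∀ x t, |t| < δ → |f x t| ≤ ε * |t|)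
    (hFd : ∀ x t, HasDerivAt (F x) (f x t) t) (hF0 : ∀ x, F x 0 = 0)
    (u : H1 Vtx) : HasFDerivAt (fun w : H1 Vtx => ∑' x, F x (w x))
    (innerSL ℝ (⟨fun x => f x (u x), f_mem f hsm u⟩ : H1 Vtx)) u := by
  set fu : H1 Vtx := ⟨fun x => f x (u x), f_mem f hsm u⟩ with hfu
  have hL : ∀ v : H1 Vtx, HasSum (fun x => f x (u x) * v x) (innerSL ℝ fu v) := by
    intro v
    have h := lp.hasSum_inner (𝕜 := ℝ) fu v
    have e : (fun i => inner ℝ (fu i) (v i)) = fun x => f x (u x) * v x := by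
      funext i; simp [hfu, mul_comm]
    rwa [e] at h
  rw [hasFDerivAt_iff_isLittleO, Asymptotics.isLittleO_iff]
  intro c hc
  set ε : ℝ := c / (2 * (2 * ‖u‖ + 1)) with hεd
  have hε : 0 < ε := by positivity
  obtain ⟨δ, hδ, h⟩ := hsm ε hε
  have hfinS : {x | ¬ |u x| < δ / 2}.Finite := ev_small u (half_pos hδ)
  set S : Finset Vtx := hfinS.toFinset with hS
  have hnS : ∀ x, x ∉ S → |u x| < δ / 2 := by
    intro x hx
    by_contra hcon
    exact hx (by simpa [hS] using hcon)
  -- finite part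
  have hfinpart : (fun w : H1 Vtx => ∑ x ∈ S, (F x (w x) - F x (u x) - f x (u x) * (w x - u x)))
      =o[𝓝 u] fun w => w - u := by
    apply Asymptotics.IsLittleO.fun_sum
    intro x _
    have hd : HasFDerivAt (fun w : H1 Vtx => F x (w x))
        ((f x (u x)) • (lp.evalCLM ℝ (fun _ : Vtx => ℝ) 2 x : H1 Vtx →L[ℝ] ℝ)) u := by
      have := (lp.evalCLM ℝ (fun _ : Vtx => ℝ) 2 x : H1 Vtx →L[ℝ] ℝ).hasFDerivAt (x := u)
      exact (hFd x (u x)).comp_hasFDerivAt u this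
    exact hd.isLittleO
  have hev1 := (Asymptotics.isLittleO_iff.1 hfinpart) (half_pos hc)
  have hev2 : ∀ᶠ w in 𝓝 u, ‖w - u‖ < min (δ / 2) 1 := by
    have : Metric.ball u (min (δ/2) 1) ∈ 𝓝 u := Metric.ball_mem_nhds _ (by positivity)
    filter_upwards [this] with w hw
    simpa [dist_eq_norm] using hw
  filter_upwards [hev1, hev2] with w hw1 hw2
  set v := w - u with hv
  have hvx : ∀ x, v x = w x - u x := fun x => by simp [hv]
  have hR : HasSum (fun x => F x (w x) - F x (u x) - f x (u x) * v x)
      (∑' x, F x (w x) - ∑' x, F x (u x) - innerSL ℝ fu v) :=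
    ((F_summable f F hsm hFd hF0 w).hasSum.sub (F_summable f F hsm hFd hF0 u).hasSum).sub (hL v)
  obtain ⟨cs1, cs2⟩ := cs u v
  have hv2 := l2_hasSum v
  have hg : Summable fun x => ε * (2 * (|u x| * |v x|) + (v x)^2) :=
    ((cs1.mul_left 2).add hv2.summable).mul_left ε
  have hbd : ∀ x : {x // x ∉ S}, ‖F x (w x) - F x (u x) - f x (u x) * v x‖ ≤
      ε * (2 * (|u x| * |v x|) + (v x)^2) := by
    intro x
    have hx := hnS x x.2
    have hvx' : |v x| < δ / 2 :=
      (coord_le v x).trans_lt (hw2.trans_le (min_le_left _ _))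
    have h1 := mvb f F hFd hε h x (u x) (v x) (by linarith)
    rw [show u x + v x = w x by rw [hvx]; ring] at h1
    have h2 := h x (u x) (by linarith)
    have h3 : |f x (u x) * v x| ≤ ε * |u x| * |v x| := by
      rw [abs_mul]; gcongr
    have h4 := abs_sub (F x (w x) - F x (u x)) (f x (u x) * v x)
    rw [Real.norm_eq_abs, ← sq_abs (v x)]
    nlinarith
  rw [← hR.tsum_eq, ← hR.summable.sum_add_tsum_subtype_compl S]
  have ht : ‖∑' x : {x // x ∉ S}, (F x (w x) - F x (u x) - f x (u x) * v x)‖ ≤ c / 2 * ‖v‖ := by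
    refine (tsum_of_norm_bounded (hg.subtype _).hasSum hbd).trans ?_
    refine (Summable.tsum_subtype_le (fun x => ε * (2 * (|u x| * |v x|) + (v x)^2)) {x | x ∉ S}
      (fun x => by positivity) hg).trans ?_
    rw [tsum_mul_left, (cs1.mul_left 2).tsum_add hv2.summable, tsum_mul_left, hv2.tsum_eq]
    have hv1 : ‖v‖ ≤ 1 := (hw2.trans_le (min_le_right _ _)).le
    have : 2 * (∑' x, |u x| * |v x|) + ‖v‖^2 ≤ (2 * ‖u‖ + 1) * ‖v‖ := by
      nlinarith [norm_nonneg v]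
    calc _ ≤ ε * ((2 * ‖u‖ + 1) * ‖v‖) := by gcongr
      _ = c / 2 * ‖v‖ := by rw [hεd]; field_simp
  have hw1' : ‖∑ x ∈ S, (F x (w x) - F x (u x) - f x (u x) * v x)‖ ≤ c / 2 * ‖v‖ := by
    simpa only [hvx] using hw1
  calc _ ≤ _ := norm_add_le _ _
    _ ≤ c / 2 * ‖v‖ + c / 2 * ‖v‖ := add_le_add hw1' ht
    _ = _ := by ring

end nonlin

section scalar

lemma f_sign {g : ℝ → ℝ} (hsm : ∀ ε > 0, ∃ δ > 0, ∀ t, |t| < δ → |g t| ≤ ε * |t|)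
    (hm : StrictMonoOn (fun t => g t / |t|) (Set.Iio 0) ∧
      StrictMonoOn (fun t => g t / |t|) (Set.Ioi 0)) :
    (∀ t, 0 < t → 0 ≤ g t) ∧ (∀ t, t < 0 → g t ≤ 0) := by
  constructor
  · intro t ht
    by_contra! hcon
    obtain ⟨δ, hδ, h⟩ := hsm (-g t / t) (div_pos (by linarith) ht)
    set r := min (δ/2) (t/2) with hr
    have hr0 : 0 < r := by positivity
    have hrt : r < t := (min_le_right _ _).trans_lt (by linarith)
    have hrδ : r < δ := (min_le_left _ _).trans_lt (by linarith)
    have h1 := h r (by rwa [abs_of_pos hr0])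
    have h2 := hm.2 (Set.mem_Ioi.2 hr0) (Set.mem_Ioi.2 ht) hrt
    simp only [abs_of_pos hr0, abs_of_pos ht] at h1 h2
    rw [div_lt_iff₀ hr0] at h2
    have := neg_abs_le (g r)
    have e : -g t / t * r = -(g t / t * r) := by ring
    linarith
  · intro t ht
    by_contra! hcon
    obtain ⟨δ, hδ, h⟩ := hsm (g t / |t|) (div_pos hcon (abs_pos.2 ht.ne))
    set r := max (-(δ/2)) (t/2) with hr
    have hr0 : r < 0 := max_lt (by linarith) (by linarith)
    have hrt : t < r := lt_of_lt_of_le (by linarith) (le_max_right _ _)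
    have hrδ : -δ < r := lt_of_lt_of_le (by linarith) (le_max_left _ _)
    have h1 := h r (by rw [abs_of_neg hr0]; linarith)
    have h2 := hm.1 (Set.mem_Iio.2 ht) (Set.mem_Iio.2 hr0) hrt
    simp only at h2
    rw [lt_div_iff₀ (abs_pos.2 hr0.ne)] at h2
    have := le_abs_self (g r)
    linarith

lemma F_nonneg {g G : ℝ → ℝ} (hd : ∀ t, HasDerivAt G (g t) t) (h0 : G 0 = 0)
    (hs : (∀ t, 0 < t → 0 ≤ g t) ∧ (∀ t, t < 0 → g t ≤ 0)) (t : ℝ) : 0 ≤ G t := by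
  have hc : Continuous G := continuous_iff_continuousAt.2 fun t => (hd t).continuousAt
  have hD : Differentiable ℝ G := fun t => (hd t).differentiableAt
  rw [← h0]
  rcases le_total 0 t with ht | ht
  · refine monotoneOn_of_deriv_nonneg (convex_Ici 0) hc.continuousOn hD.differentiableOn ?_
      (Set.mem_Ici.2 le_rfl) (Set.mem_Ici.2 ht) ht
    intro x hx
    rw [interior_Ici] at hx
    rw [(hd x).deriv]; exact hs.1 x hx
  · refine antitoneOn_of_deriv_nonpos (convex_Iic 0) hc.continuousOn hD.differentiableOn ?_
      (Set.mem_Iic.2 ht) (Set.mem_Iic.2 le_rfl) ht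
    intro x hx
    rw [interior_Iic] at hx
    rw [(hd x).deriv]; exact hs.2 x hx

lemma key_sign {g : ℝ → ℝ}
    (hm : StrictMonoOn (fun t => g t / |t|) (Set.Iio 0) ∧
      StrictMonoOn (fun t => g t / |t|) (Set.Ioi 0)) (t : ℝ) {r s : ℝ} (hr : 0 < r) (hrs : r ≤ s) :
    s * (g (r * t) * t) ≤ r * (g (s * t) * t) := by
  have hs : 0 < s := hr.trans_le hrs
  rcases lt_trichotomy t 0 with ht | rfl | ht
  · have h1 : s * t ≤ r * t := by nlinarith
    have hrt : r * t < 0 := mul_neg_of_pos_of_neg hr ht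
    have hst : s * t < 0 := mul_neg_of_pos_of_neg hs ht
    have h2 := hm.1.monotoneOn (Set.mem_Iio.2 hst) (Set.mem_Iio.2 hrt) h1
    simp only [abs_of_neg hrt, abs_of_neg hst] at h2
    rw [div_le_div_iff₀ (by linarith) (by linarith)] at h2
    nlinarith
  · simp
  · have h1 : r * t ≤ s * t := by nlinarith
    have hrt : 0 < r * t := mul_pos hr ht
    have hst : 0 < s * t := mul_pos hs ht
    have h2 := hm.2.monotoneOn (Set.mem_Ioi.2 hrt) (Set.mem_Ioi.2 hst) h1
    simp only [abs_of_pos hrt, abs_of_pos hst] at h2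
    rw [div_le_div_iff₀ hrt hst] at h2
    nlinarith

lemma key_ineq {g G : ℝ → ℝ} (hd : ∀ t, HasDerivAt G (g t) t)
    (hm : StrictMonoOn (fun t => g t / |t|) (Set.Iio 0) ∧
      StrictMonoOn (fun t => g t / |t|) (Set.Ioi 0)) (t s : ℝ) (hs : 0 < s) :
    (s^2 - 1) / 2 * (g t * t) ≤ G (s * t) - G t := by
  let k : ℝ → ℝ := fun s => G (s * t) - s^2 / 2 * (g t * t)
  have hk : ∀ s, HasDerivAt k (g (s * t) * t - s * (g t * t)) s := by
    intro s
    have h1 : HasDerivAt (fun s : ℝ => s * t) t s := by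
      simpa using (hasDerivAt_id s).mul_const t
    have h2 := (hd (s * t)).comp s h1
    have h3 : HasDerivAt (fun s : ℝ => s^2 / 2 * (g t * t)) (s * (g t * t)) s := by
      have := ((hasDerivAt_pow 2 s).div_const 2).mul_const (g t * t)
      simpa using this
    exact h2.sub h3
  have hc : Continuous k := continuous_iff_continuousAt.2 fun t => (hk t).continuousAt
  have hD : Differentiable ℝ k := fun t => (hk t).differentiableAt
  have hmin : k 1 ≤ k s := by
    rcases le_total 1 s with h | h
    · refine monotoneOn_of_deriv_nonneg (convex_Ici 1) hc.continuousOn hD.differentiableOn ?_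
        (Set.mem_Ici.2 le_rfl) (Set.mem_Ici.2 h) h
      intro x hx
      rw [interior_Ici] at hx
      rw [(hk x).deriv]
      have := key_sign hm t one_pos (le_of_lt hx)
      simp at this; linarith
    · refine antitoneOn_of_deriv_nonpos (convex_Icc (s) 1) hc.continuousOn hD.differentiableOn ?_
        (Set.mem_Icc.2 ⟨le_rfl, h⟩) (Set.mem_Icc.2 ⟨h, le_rfl⟩) h
      intro x hx
      rw [interior_Icc] at hx
      rw [(hk x).deriv]
      have := key_sign hm t (hs.trans hx.1) hx.2.le
      simp at this; linarith
  simp only [k] at hmin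
  simp at hmin
  linarith

end scalar
end Neh

/-- The min-max characterization of the ground state level:
`inf_N Φ = inf_{w ≠ 0} sup_{s>0} Φ(sw)`. -/
theorem stmt16
    {Vtx : Type*} (adj : Vtx → Vtx → Prop) (D : ℕ)
    (hsym : ∀ x y, adj x y → adj y x)
    (hirr : ∀ x, ¬ adj x x)
    (hfin : ∀ x, {y | adj x y}.Finite)
    (hdeg : ∀ x, {y | adj x y}.ncard ≤ D)
    (Vp : Vtx → ℝ) (C1 C2 : ℝ) (hC1 : 0 < C1)
    (hVbd : ∀ x, C1 ≤ Vp x ∧ Vp x ≤ C2)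
    (f : Vtx → ℝ → ℝ) (hcont : ∀ x, Continuous (f x))
    (a q : ℝ) (ha : 0 < a) (hq : 2 < q)
    (hgrowth : ∀ x t, |f x t| ≤ a * (|t| + |t| ^ (q - 1)))
    (hsmall : ∀ ε > 0, ∃ δ > 0, ∀ x t, t ≠ 0 → |t| < δ → |f x t| ≤ ε * |t|)
    (hmono : ∀ x, StrictMonoOn (fun t => f x t / |t|) (Set.Iio 0) ∧
             StrictMonoOn (fun t => f x t / |t|) (Set.Ioi 0))
    (F : Vtx → ℝ → ℝ) (hF : ∀ x t, F x t = ∫ s in (0:ℝ)..t, f x s)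
    (hsuper : ∀ M : ℝ, ∃ R > 0, ∀ x t, R ≤ |t| → M ≤ F x t / t ^ 2)
    :
    sInf (PhiF adj Vp F '' Nehari adj Vp F) =
      sInf {y : ℝ | ∃ w : H1 Vtx, w ≠ 0 ∧
        y = sSup ((fun s : ℝ => PhiF adj Vp F (s • w)) '' Set.Ioi 0)} := by
  classical
  have hf0 : ∀ x, f x 0 = 0 := by
    intro x
    have := hgrowth x 0
    rw [abs_zero, Real.zero_rpow (by linarith)] at this
    simpa using this
  have hsm : ∀ ε > 0, ∃ δ > 0, ∀ x t, |t| < δ → |f x t| ≤ ε * |t| := by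
    intro ε hε
    obtain ⟨δ, hδ, h⟩ := hsmall ε hε
    refine ⟨δ, hδ, fun x t ht => ?_⟩
    by_cases h0 : t = 0
    · simp [h0, hf0]
    · exact h x t h0 ht
  have hFd : ∀ x t, HasDerivAt (F x) (f x t) t := by
    intro x t
    have : F x = fun t => ∫ s in (0:ℝ)..t, f x s := funext (hF x)
    rw [this]
    exact (hcont x).integral_hasStrictDerivAt 0 t |>.hasDerivAt
  have hF0 : ∀ x, F x 0 = 0 := by intro x; simp [hF]
  have hFnn : ∀ x t, 0 ≤ F x t := fun x t =>
    Neh.F_nonneg (hFd x) (hF0 x) (Neh.f_sign (fun ε hε => by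
      obtain ⟨δ, hδ, h⟩ := hsm ε hε
      exact ⟨δ, hδ, h x⟩) (hmono x)) t
  set Φ := PhiF adj Vp F with hΦ
  have hΦe : ∀ u, Φ u = (1/2) * Neh.Q adj Vp u - ∑' x, F x (u x) := fun u => rfl
  have hQd := Neh.Q_diff adj D hsym hfin hdeg Vp C1 C2 hC1 hVbd
  have hFs := Neh.F_summable f F hsm hFd hF0
  have hdiff : Differentiable ℝ Φ := fun u =>
    ((hQd u).const_mul (1/2)).sub (Neh.N_hasFDerivAt f F hsm hFd hF0 u).differentiableAt
  -- the derivative in the direction `u`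
  have hQu : ∀ u, fderiv ℝ (Neh.Q adj Vp) u u = 2 * Neh.Q adj Vp u := by
    intro u
    have hl : HasDerivAt (fun s : ℝ => s • u) u (1:ℝ) := by
      simpa using (hasDerivAt_id (1:ℝ)).smul_const u
    have h1 : HasDerivAt (fun s : ℝ => Neh.Q adj Vp (s • u)) (fderiv ℝ (Neh.Q adj Vp) u u) 1 := by
      have h := (hQd ((1:ℝ) • u)).hasFDerivAt.comp_hasDerivAt (1:ℝ) hl
      rwa [one_smul] at h
    have h2 : HasDerivAt (fun s : ℝ => Neh.Q adj Vp (s • u)) (2 * Neh.Q adj Vp u) 1 := by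
      simp only [Neh.Q_smul]
      have := ((hasDerivAt_id (1:ℝ)).pow 2).mul_const (Neh.Q adj Vp u)
      simpa using this
    exact h1.unique h2
  have hΦu : ∀ u, fderiv ℝ Φ u u = Neh.Q adj Vp u - ∑' x, f x (u x) * u x := by
    intro u
    have hN := Neh.N_hasFDerivAt f F hsm hFd hF0 u
    have h : HasFDerivAt Φ _ u := ((hQd u).hasFDerivAt.const_mul (1/2)).sub hN
    rw [h.fderiv]
    simp only [sub_apply, smul_apply, hQu, innerSL_apply_apply,
      lp.inner_eq_tsum]
    simp [mul_comm]
  have hfs : ∀ u : H1 Vtx, Summable fun x => f x (u x) * u x := by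
    intro u
    have := lp.summable_inner (𝕜 := ℝ) (⟨fun x => f x (u x), Neh.f_mem f hsm u⟩ : H1 Vtx) u
    simpa [mul_comm] using this
  -- (1)
  have hmax : ∀ u ∈ Nehari adj Vp F, ∀ s : ℝ, 0 < s → Φ (s • u) ≤ Φ u := by
    rintro u ⟨-, hu⟩ s hs
    rw [hΦu] at hu
    have h1 : ∑' x, (s^2 - 1) / 2 * (f x (u x) * u x) ≤
        ∑' x, (F x ((s • u) x) - F x (u x)) := by
      refine ((hfs u).mul_left _).tsum_le_tsum (fun x => ?_) ((hFs _).sub (hFs u))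
      have := Neh.key_ineq (hFd x) (hmono x) (u x) s hs
      simpa using this
    rw [tsum_mul_left, (hFs _).tsum_sub (hFs u)] at h1
    rw [hΦe, hΦe, Neh.Q_smul]
    have : ∑' x, f x (u x) * u x = Neh.Q adj Vp u := by linarith
    rw [this] at h1
    linarith
  -- (2)
  have hex : ∀ w : H1 Vtx, w ≠ 0 → ∃ s : ℝ, 0 < s ∧ s • w ∈ Nehari adj Vp F := by
    intro w hw
    have hwn : 0 < ‖w‖ := norm_pos_iff.2 hw
    have hline : ∀ s : ℝ, HasDerivAt (fun s : ℝ => Φ (s • w)) (fderiv ℝ Φ (s • w) w) s := by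
      intro s
      have hl : HasDerivAt (fun s : ℝ => s • w) w s := by
        simpa using (hasDerivAt_id s).smul_const w
      exact (hdiff (s • w)).hasFDerivAt.comp_hasDerivAt s hl
    have hφc : Continuous (fun s : ℝ => Φ (s • w)) :=
      continuous_iff_continuousAt.2 fun s => (hline s).continuousAt
    have hQw := Neh.Q_ge adj D hsym hfin hdeg Vp C1 C2 hC1 hVbd w
    have hwx : ∃ x, w x ≠ 0 := by
      by_contra! hcon
      exact hw (by ext x; simpa using hcon x)
    obtain ⟨x0, hx0⟩ := hwx
    -- positive for a small parameter
    obtain ⟨s0, hs0, hs0Φ⟩ : ∃ s0 : ℝ, 0 < s0 ∧ 0 < Φ (s0 • w) := by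
      obtain ⟨δ, hδ, h⟩ := hsm (C1/4) (by positivity)
      refine ⟨δ / 2 / ‖w‖, by positivity, ?_⟩
      set s0 := δ / 2 / ‖w‖ with hs0
      have hs0p : 0 < s0 := by positivity
      have hn : ‖s0 • w‖ < δ := by
        rw [norm_smul, Real.norm_eq_abs, abs_of_pos hs0p, hs0, div_mul_cancel₀ _ hwn.ne']
        linarith
      have h2 := Neh.l2_hasSum (s0 • w)
      have h1 : ∑' x, F x ((s0 • w) x) ≤ C1/4 * ‖s0 • w‖^2 := by
        rw [← h2.tsum_eq, ← tsum_mul_left]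
        refine (hFs _).tsum_le_tsum (fun x => ?_) (h2.summable.mul_left _)
        exact (le_abs_self _).trans (Neh.F_small f F hFd hF0 (by positivity) h x _
          ((Neh.coord_le _ x).trans_lt hn))
      have h3 := Neh.Q_ge adj D hsym hfin hdeg Vp C1 C2 hC1 hVbd (s0 • w)
      have h4 : 0 < C1 * ‖s0 • w‖^2 := by
        have : s0 • w ≠ 0 := smul_ne_zero hs0p.ne' hw
        have := norm_pos_iff.2 this
        positivity
      rw [hΦe]
      linarith
    -- nonpositive for large parameters
    obtain ⟨R, hR, hRΦ⟩ : ∃ R : ℝ, 0 < R ∧ ∀ s, R ≤ s → Φ (s • w) ≤ 0 := by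
      obtain ⟨R, hR, h⟩ := hsuper (Neh.Q adj Vp w / (w x0)^2)
      have hx0' := abs_pos.2 hx0
      refine ⟨R / |w x0|, by positivity, fun s hs => ?_⟩
      have hsp : 0 < s := lt_of_lt_of_le (by positivity) hs
      have h1 := h x0 (s * w x0) (by
        rw [abs_mul, abs_of_pos hsp]
        exact (div_le_iff₀ hx0').1 hs)
      rw [le_div_iff₀ (by positivity)] at h1
      have h2 : F x0 ((s • w) x0) ≤ ∑' x, F x ((s • w) x) :=
        (hFs _).le_tsum x0 (fun x _ => hFnn x _)
      have e : Neh.Q adj Vp w / (w x0)^2 * (s * w x0)^2 = s^2 * Neh.Q adj Vp w := by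
        field_simp
      rw [e] at h1
      have h3 : F x0 ((s • w) x0) = F x0 (s * w x0) := by simp
      have h4 : 0 ≤ s^2 * Neh.Q adj Vp w := by
        have : 0 ≤ Neh.Q adj Vp w := le_trans (by positivity) hQw
        positivity
      rw [hΦe, Neh.Q_smul]
      linarith
    have hs0R : s0 < R := by
      by_contra! hcon
      linarith [hRΦ s0 hcon]
    obtain ⟨s, hsI, hsmax⟩ := isCompact_Icc.exists_isMaxOn (s := Set.Icc (0:ℝ) R)
      ⟨s0, hs0.le, hs0R.le⟩ hφc.continuousOn
    have hpos : 0 < Φ (s • w) := lt_of_lt_of_le hs0Φ (hsmax ⟨hs0.le, hs0R.le⟩)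
    have hs_pos : 0 < s := by
      rcases hsI.1.lt_or_eq with h | h
      · exact h
      · exfalso
        rw [← h, hΦe, Neh.Q_smul] at hpos
        simp [hF0] at hpos
    have hsR : s < R := by
      by_contra! hcon
      linarith [hRΦ s hcon]
    have hloc : IsLocalMax (fun s : ℝ => Φ (s • w)) s :=
      hsmax.isLocalMax (Icc_mem_nhds hs_pos hsR)
    have hz := hloc.hasDerivAt_eq_zero (hline s)
    refine ⟨s, hs_pos, smul_ne_zero hs_pos.ne' hw, ?_⟩
    rw [map_smul, hz, smul_zero]
  have hsup : ∀ u ∈ Nehari adj Vp F, ∀ r : ℝ, 0 < r →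
      sSup ((fun s : ℝ => Φ (s • (r • u))) '' Set.Ioi 0) = Φ u := by
    intro u hu r hr
    refine IsGreatest.csSup_eq ⟨⟨r⁻¹, inv_pos.2 hr, ?_⟩, ?_⟩
    · simp [smul_smul, inv_mul_cancel₀ hr.ne']
    · rintro _ ⟨s, hs, rfl⟩
      simp only [smul_smul]
      exact hmax u hu _ (mul_pos hs hr)
  congr 1
  ext y
  constructor
  · rintro ⟨u, hu, rfl⟩
    refine ⟨u, hu.1, ?_⟩
    have := hsup u hu 1 one_pos
    rw [one_smul] at this
    exact this.symm
  · rintro ⟨w, hw, rfl⟩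
    obtain ⟨s, hs, hN⟩ := hex w hw
    refine ⟨s • w, hN, ?_⟩
    have := hsup _ hN s⁻¹ (inv_pos.2 hs)
    rw [smul_smul, inv_mul_cancel₀ hs.ne', one_smul] at this
    exact this.symm
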